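/- Let 1 ≤ p < ∞, let y_1, …, y_K ∈ M_N, and let u : M_N → M_N be the map u(x) = Σ_{k=1}^K y_k x y_k^*. Assume ‖u(x)‖_{S_p} ≤ ‖x‖_{S_p} for all x ∈ M_N. Let n ≥ 1, let α, β ∈ M_N, let g ∈ M_N ⊗ M_n have operator norm at most 1 on ℂ^N ⊗ ℂ^n, and set x = (α ⊗ I_n)·g·(β ⊗ I_n). Then ‖(u ⊗ id_{M_n})(x)‖_{S_p^N[M_n]} ≤ ‖u(αα^*)‖_{S_p}^{1/2} · ‖u(β^*β)‖_{S_p}^{1/2}. (The key estimate in the proof of Lemma 2.3.) -/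

import Mathlib

open scoped Kronecker ENNReal Classical ComplexOrder
open Matrix

noncomputable section

/-- The operator norm (`S_∞` norm) of a complex matrix, acting on Euclidean space. -/
def opNorm {ι : Type} [Fintype ι] [DecidableEq ι] (a : Matrix ι ι ℂ) : ℝ :=
  ‖LinearMap.toContinuousLinearMap (Matrix.toEuclideanLin a)‖

/-- The Schatten `p`-norm of a complex matrix: the `ℓ^p` norm of its singular values
(the square roots of the eigenvalues of `aᴴ * a`); for `p = ∞` it is the operator norm. -/
def schattenNorm {ι : Type} [Fintype ι] [DecidableEq ι] (p : ℝ≥0∞) (a : Matrix ι ι ℂ) : ℝ :=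
  if p = ∞ then opNorm a
  else (∑ i, Real.sqrt ((Matrix.posSemidef_conjTranspose_mul_self a).isHermitian.eigenvalues i) ^ p.toReal)
      ^ (1 / p.toReal)

/-- Pisier's vector-valued Schatten norm `‖x‖_{S_p^N[M_n]}` on `M_N ⊗ M_n`:
the infimum of `‖a‖_{S_{2p}} ‖y‖_{S_∞} ‖b‖_{S_{2p}}` over factorizations
`x = (a ⊗ 1) · y · (b ⊗ 1)`. -/
def pisierNorm (p : ℝ≥0∞) {N n : ℕ} (x : Matrix (Fin N × Fin n) (Fin N × Fin n) ℂ) : ℝ :=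
  sInf { r | ∃ (a b : Matrix (Fin N) (Fin N) ℂ)
      (y : Matrix (Fin N × Fin n) (Fin N × Fin n) ℂ),
      x = (a ⊗ₖ (1 : Matrix (Fin n) (Fin n) ℂ)) * y * (b ⊗ₖ (1 : Matrix (Fin n) (Fin n) ℂ)) ∧
      r = schattenNorm (2 * p) a * opNorm y * schattenNorm (2 * p) b }

/-- The amplification `u ⊗ id_{M_n} : M_N ⊗ M_n → M_m ⊗ M_n` of a map `u : M_N → M_m`,
acting as `u` on each `M_n`-block entry. -/
def amp {N m n : ℕ} (u : Matrix (Fin N) (Fin N) ℂ → Matrix (Fin m) (Fin m) ℂ)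
    (x : Matrix (Fin N × Fin n) (Fin N × Fin n) ℂ) : Matrix (Fin m × Fin n) (Fin m × Fin n) ℂ :=
  Matrix.of fun ik jl => u (Matrix.of fun i j => x (i, ik.2) (j, jl.2)) ik.1 jl.1

/-- The amplification `id_{M_n} ⊗ u : M_n ⊗ M_N → M_n ⊗ M_m` of a map `u : M_N → M_m`. -/
def ampLeft {n N m : ℕ} (u : Matrix (Fin N) (Fin N) ℂ → Matrix (Fin m) (Fin m) ℂ)
    (x : Matrix (Fin n × Fin N) (Fin n × Fin N) ℂ) : Matrix (Fin n × Fin m) (Fin n × Fin m) ℂ :=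
  Matrix.of fun ki lj => u (Matrix.of fun i j => x (ki.1, i) (lj.1, j)) ki.2 lj.2

/-- The trace pairing `T : M_k ⊗ M_k → ℂ`, with `T(a ⊗ b) = tr(ᵗa·b)`; writing
`z` as a `k×k` matrix of blocks `z_{ij} ∈ M_k`, `T(z) = Σ_{i,j} (z_{ij})_{ij}`. -/
def tracePair {k : ℕ} (z : Matrix (Fin k × Fin k) (Fin k × Fin k) ℂ) : ℂ :=
  ∑ i : Fin k, ∑ j : Fin k, z (i, i) (j, j)

/-- A map `u : M_N → M_m` is completely positive if all its amplifications
`id_{M_n} ⊗ u` preserve positive semidefiniteness. -/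
def CompletelyPositive {N m : ℕ}
    (u : Matrix (Fin N) (Fin N) ℂ → Matrix (Fin m) (Fin m) ℂ) : Prop :=
  ∀ (n : ℕ) (x : Matrix (Fin n × Fin N) (Fin n × Fin N) ℂ),
    x.PosSemidef → (ampLeft u x).PosSemidef

/-- The regular norm (relative to `p`) of `u : M_N → M_m`: the supremum in `[0,∞]`
over `n ≥ 1` of the norms of the amplifications `u ⊗ id_{M_n}` from
`(M_N ⊗ M_n, ‖·‖_{S_p^N[M_n]})` to `(M_m ⊗ M_n, ‖·‖_{S_p^m[M_n]})`. -/
def regNorm (p : ℝ≥0∞) {N m : ℕ}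
    (u : Matrix (Fin N) (Fin N) ℂ → Matrix (Fin m) (Fin m) ℂ) : ℝ≥0∞ :=
  ⨆ (n : ℕ) (x : Matrix (Fin N × Fin (n + 1)) (Fin N × Fin (n + 1)) ℂ)
    (_ : pisierNorm p x ≤ 1), ENNReal.ofReal (pisierNorm p (amp u x))

/-- Pisier's norm `ρ_p` on `M_n ⊗ M_m` (with `q` the conjugate exponent `p'`):
the infimum of `‖γ‖_{S_{2p}} ‖α‖_{S_{2p'}} ‖g‖_{S_∞} ‖δ‖_{S_{2p}} ‖β‖_{S_{2p'}}`
over factorizations `a = (γ ⊗ α) · g · (δ ⊗ β)`. -/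
def rho (p q : ℝ≥0∞) {n m : ℕ} (a : Matrix (Fin n × Fin m) (Fin n × Fin m) ℂ) : ℝ :=
  sInf { r | ∃ (γ δ : Matrix (Fin n) (Fin n) ℂ) (α β : Matrix (Fin m) (Fin m) ℂ)
      (g : Matrix (Fin n × Fin m) (Fin n × Fin m) ℂ),
      a = (γ ⊗ₖ α) * g * (δ ⊗ₖ β) ∧
      r = schattenNorm (2 * p) γ * schattenNorm (2 * q) α * opNorm g *
          schattenNorm (2 * p) δ * schattenNorm (2 * q) β }

/-- The amplification `u ⊗ id_{M_n}` of a map `u` defined only on a subspace `S ⊆ M_N`,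
applied to an element of `M_N ⊗ M_n` all of whose `M_N`-valued block entries lie in `S`. -/
def ampOn {N m n : ℕ} (S : Submodule ℂ (Matrix (Fin N) (Fin N) ℂ))
    (u : S →ₗ[ℂ] Matrix (Fin m) (Fin m) ℂ)
    (x : Matrix (Fin N × Fin n) (Fin N × Fin n) ℂ)
    (h : ∀ k l : Fin n, (Matrix.of fun i j => x (i, k) (j, l)) ∈ S) :
    Matrix (Fin m × Fin n) (Fin m × Fin n) ℂ :=
  Matrix.of fun ik jl => u ⟨Matrix.of fun i j => x (i, ik.2) (j, jl.2), h ik.2 jl.2⟩ ik.1 jl.1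

end

section Matrix

open scoped Matrix.Norms.L2Operator

variable {ι κ : Type} [Fintype ι] [DecidableEq ι] [Fintype κ]

theorem schattenNorm_nonneg (p : ℝ≥0∞) (a : Matrix ι ι ℂ) : 0 ≤ schattenNorm p a := by
  unfold schattenNorm
  split_ifs
  · exact norm_nonneg _
  · positivity

/-- The eigenvalues of a Hermitian matrix that is unitarily conjugate to a real diagonal matrix
are, up to order, the diagonal entries. -/
theorem Matrix.IsHermitian.sum_eigenvalues_of_eq_conj_diagonal {A : Matrix ι ι ℂ}
    (hA : A.IsHermitian) (U : Matrix.unitaryGroup ι ℂ) (d : ι → ℝ)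
    (h : A = Unitary.conjStarAlgAut ℂ _ U (diagonal fun i => (d i : ℂ))) (f : ℝ → ℝ) :
    ∑ i, f (hA.eigenvalues i) = ∑ i, f (d i) := by
  have hchar : A.charpoly = (diagonal fun i => (d i : ℂ)).charpoly := by
    rw [h, Unitary.conjStarAlgAut_apply, charpoly_mul_comm, ← mul_assoc]
    simp
  have hroots := hA.roots_charpoly_eq_eigenvalues
  rw [hchar, charpoly_diagonal, Polynomial.roots_prod _ _
    (by simp [Finset.prod_ne_zero_iff, Polynomial.X_sub_C_ne_zero])] at hroots
  have := congrArg (fun s : Multiset ℂ => (s.map fun z => f z.re).sum) hroots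
  simpa using this.symm

theorem schattenNorm_two_mul_of_conjTranspose_mul_self {p : ℝ≥0∞} (hp : p ≠ 0) (hptop : p ≠ ∞)
    {a H : Matrix ι ι ℂ} (h : aᴴ * a = H) :
    schattenNorm (2 * p) a = Real.sqrt (schattenNorm p H) := by
  subst h
  have hpos : 0 < p.toReal := ENNReal.toReal_pos hp hptop
  have hpsd := Matrix.posSemidef_conjTranspose_mul_self a
  have hH := hpsd.isHermitian
  have hsq : (aᴴ * a)ᴴ * (aᴴ * a) = Unitary.conjStarAlgAut ℂ _ hH.eigenvectorUnitary
      (diagonal fun i => ((hH.eigenvalues i ^ 2 : ℝ) : ℂ)) := by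
    rw [hH.eq]
    conv_lhs => rw [hH.spectral_theorem, ← map_mul, diagonal_mul_diagonal]
    simp [sq]
  have hsum := (Matrix.posSemidef_conjTranspose_mul_self
    (aᴴ * a)).isHermitian.sum_eigenvalues_of_eq_conj_diagonal _ _ hsq
    fun t => Real.sqrt t ^ p.toReal
  have h2p : (2 * p : ℝ≥0∞) ≠ ∞ := ENNReal.mul_ne_top (by simp) hptop
  rw [schattenNorm, schattenNorm, if_neg h2p, if_neg hptop, hsum, Real.sqrt_eq_rpow,
    ← Real.rpow_mul (by positivity), ENNReal.toReal_mul]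
  congr 1
  · refine Finset.sum_congr rfl fun i _ => ?_
    rw [Real.sqrt_sq (hpsd.eigenvalues_nonneg i), ENNReal.toReal_ofNat,
      Real.rpow_mul (Real.sqrt_nonneg _)]
    norm_num [Real.sq_sqrt (hpsd.eigenvalues_nonneg i)]
  · rw [ENNReal.toReal_ofNat]
    field_simp

/-- Polar decomposition of a rectangular matrix: `A = a * V` with `a` self-adjoint,
`a ^ 2 = A * Aᴴ`, and `V` a partial isometry. -/
theorem Matrix.exists_isHermitian_mul_partialIsometry (A : Matrix ι κ ℂ) :
    ∃ (a : Matrix ι ι ℂ) (V : Matrix ι κ ℂ), a.IsHermitian ∧ a * a = A * Aᴴ ∧ A = a * V ∧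
      V * Vᴴ * (V * Vᴴ) = V * Vᴴ := by
  have hpsd := Matrix.posSemidef_self_mul_conjTranspose A
  have hH := hpsd.isHermitian
  set φ := Unitary.conjStarAlgAut ℂ (Matrix ι ι ℂ) hH.eigenvectorUnitary
  set e := hH.eigenvalues
  have he0 : ∀ i, 0 ≤ e i := hpsd.eigenvalues_nonneg
  set D : (ι → ℝ) → Matrix ι ι ℂ := fun f => φ (diagonal fun i => (f i : ℂ)) with hD
  have hDmul : ∀ f g, D f * D g = D fun i => f i * g i := fun f g => by
    simp [hD, ← map_mul, diagonal_mul_diagonal]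
  have hDstar : ∀ f, (D f)ᴴ = D f := fun f => by
    rw [← star_eq_conjTranspose, hD]
    simp only [← map_star, star_eq_conjTranspose, diagonal_conjTranspose]
    congr 2
    ext i
    simp
  have hspecD : A * Aᴴ = D e := hH.spectral_theorem
  set s : ι → ℝ := fun i => Real.sqrt (e i)
  set P := D fun i => s i * (s i)⁻¹ with hP
  have hss : ∀ i, s i * s i = e i := fun i => Real.mul_self_sqrt (he0 i)
  have hPA : P * A = A := by
    rw [← sub_eq_zero, ← self_mul_conjTranspose_eq_zero]
    have h1 : P * (A * Aᴴ) = A * Aᴴ := by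
      rw [hspecD, hP, hDmul]
      congr 1
      ext i
      rw [← hss]
      by_cases h : s i = 0
      · simp [h]
      · field_simp
    have h2 : (P * A - A) * (P * A - A)ᴴ
        = (P * (A * Aᴴ) - A * Aᴴ) * Pᴴ - (P * (A * Aᴴ) - A * Aᴴ) := by
      simp only [conjTranspose_sub, conjTranspose_mul, Matrix.sub_mul, Matrix.mul_sub,
        Matrix.mul_assoc]
    rw [h2, h1]
    simp
  have hVV : D (fun i => (s i)⁻¹) * A * (D (fun i => (s i)⁻¹) * A)ᴴ = P := by
    rw [conjTranspose_mul, hDstar, Matrix.mul_assoc, ← Matrix.mul_assoc A, hspecD, hDmul, hDmul, hP]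
    congr 1
    ext i
    rw [← hss]
    by_cases h : s i = 0
    · simp [h]
    · field_simp
  refine ⟨D s, D (fun i => (s i)⁻¹) * A, hDstar s, ?_, ?_, ?_⟩
  · rw [hspecD, hDmul]
    simp only [hss]
  · rw [← Matrix.mul_assoc, hDmul, ← hP, hPA]
  · rw [hVV, hP, hDmul]
    congr 1
    ext i
    by_cases h : s i = 0
    · simp [h]
    · field_simp

variable {ν : Type} [DecidableEq κ] [Fintype ν] [DecidableEq ν]

/-- A partial isometry, tensored with the identity, is a contraction. -/
theorem Matrix.norm_kronecker_one_le_one {V : Matrix ι κ ℂ}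
    (h : V * Vᴴ * (V * Vᴴ) = V * Vᴴ) : ‖V ⊗ₖ (1 : Matrix ν ν ℂ)‖ ≤ 1 := by
  set W := V ⊗ₖ (1 : Matrix ν ν ℂ) with hW
  have hproj : W * Wᴴ * (W * Wᴴ) = W * Wᴴ := by
    simp only [hW, conjTranspose_kronecker, conjTranspose_one, ← mul_kronecker_mul, mul_one, h]
  have hWW : ‖W * Wᴴ‖ = ‖W‖ * ‖W‖ := by
    simpa [l2_opNorm_conjTranspose] using l2_opNorm_conjTranspose_mul_self Wᴴ
  have hidem : ‖W * Wᴴ‖ = ‖W * Wᴴ‖ * ‖W * Wᴴ‖ := by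
    have := l2_opNorm_conjTranspose_mul_self (W * Wᴴ)
    rwa [(isHermitian_mul_conjTranspose_self W).eq, hproj] at this
  rw [hWW] at hidem
  by_contra! hlt
  nlinarith [mul_pos (sub_pos.2 hlt) (sub_pos.2 hlt), norm_nonneg W,
    mul_lt_mul'' hlt hlt zero_le_one zero_le_one]

variable (ι κ ν) in
/-- The direct sum of copies of `g`, indexed by `κ`, as a star homomorphism. -/
def Matrix.replicateBlock :
    Matrix (ι × ν) (ι × ν) ℂ →⋆ₙₐ[ℂ] Matrix ((κ × ι) × ν) ((κ × ι) × ν) ℂ where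
  toFun g := ((1 : Matrix κ κ ℂ) ⊗ₖ g).submatrix (Equiv.prodAssoc κ ι ν) (Equiv.prodAssoc κ ι ν)
  map_smul' c g := by simp only [kronecker_smul]; rfl
  map_zero' := by simp
  map_add' g h := by simp only [kronecker_add]; rfl
  map_mul' g h := by
    rw [submatrix_mul_equiv, ← mul_kronecker_mul, mul_one]
  map_star' g := by
    simp [star_eq_conjTranspose, conjTranspose_submatrix, conjTranspose_kronecker]

theorem Matrix.norm_replicateBlock_le (g : Matrix (ι × ν) (ι × ν) ℂ) :
    ‖replicateBlock ι κ ν g‖ ≤ ‖g‖ :=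
  NonUnitalStarAlgHom.norm_apply_le (replicateBlock ι κ ν) g

/-- Compressing copies of a contraction by partial isometries yields a contraction. -/
theorem Matrix.norm_mul_replicateBlock_mul_le_one {V W : Matrix ι (κ × ι) ℂ}
    (hV : V * Vᴴ * (V * Vᴴ) = V * Vᴴ) (hW : W * Wᴴ * (W * Wᴴ) = W * Wᴴ)
    {g : Matrix (ι × ν) (ι × ν) ℂ} (hg : ‖g‖ ≤ 1) :
    ‖(V ⊗ₖ (1 : Matrix ν ν ℂ)) * replicateBlock ι κ ν g * (Wᴴ ⊗ₖ (1 : Matrix ν ν ℂ))‖ ≤ 1 := by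
  have hV1 := norm_kronecker_one_le_one (ν := ν) hV
  have hW1 : ‖Wᴴ ⊗ₖ (1 : Matrix ν ν ℂ)‖ ≤ 1 := by
    have hadj := l2_opNorm_conjTranspose (W ⊗ₖ (1 : Matrix ν ν ℂ))
    rw [conjTranspose_kronecker, conjTranspose_one] at hadj
    exact hadj.trans_le (norm_kronecker_one_le_one hW)
  have hG1 := (norm_replicateBlock_le (κ := κ) g).trans hg
  calc _ ≤ ‖V ⊗ₖ (1 : Matrix ν ν ℂ)‖ * ‖replicateBlock ι κ ν g‖ *
        ‖Wᴴ ⊗ₖ (1 : Matrix ν ν ℂ)‖ :=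
      (l2_opNorm_mul _ _).trans
        (mul_le_mul_of_nonneg_right (l2_opNorm_mul _ _) (norm_nonneg _))
    _ ≤ 1 * 1 * 1 := by gcongr
    _ = 1 := by norm_num

end Matrix

/-- The block row `(y_k * α)_k`. -/
def Matrix.blockRow {ι κ : Type} [Fintype ι] (y : κ → Matrix ι ι ℂ) (α : Matrix ι ι ℂ) : Matrix ι (κ × ι) ℂ :=
  Matrix.of fun i kj => (y kj.1 * α) i kj.2

theorem Matrix.blockRow_mul_conjTranspose {ι κ : Type} [Fintype ι] [Fintype κ]
    (y : κ → Matrix ι ι ℂ) (α : Matrix ι ι ℂ) :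
    blockRow y α * (blockRow y α)ᴴ = ∑ k, y k * (α * αᴴ) * (y k)ᴴ := by
  have h : ∀ k, y k * (α * αᴴ) * (y k)ᴴ = (y k * α) * (y k * α)ᴴ := fun k => by
    simp only [conjTranspose_mul, Matrix.mul_assoc]
  ext i j
  simp only [h, Matrix.sum_apply, Matrix.mul_apply (M := blockRow y α), Fintype.sum_prod_type]
  simp only [Matrix.mul_apply (N := (_ * _)ᴴ)]
  rfl

theorem pisierNorm_le {N n : ℕ} (p : ℝ≥0∞) (a b : Matrix (Fin N) (Fin N) ℂ)
    (y : Matrix (Fin N × Fin n) (Fin N × Fin n) ℂ) :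
    pisierNorm p ((a ⊗ₖ (1 : Matrix (Fin n) (Fin n) ℂ)) * y *
      (b ⊗ₖ (1 : Matrix (Fin n) (Fin n) ℂ))) ≤
      schattenNorm (2 * p) a * opNorm y * schattenNorm (2 * p) b := by
  refine csInf_le ⟨0, ?_⟩ ⟨a, b, y, rfl, rfl⟩
  rintro _ ⟨a, b, y, -, rfl⟩
  exact mul_nonneg (mul_nonneg (schattenNorm_nonneg _ _) (norm_nonneg _)) (schattenNorm_nonneg _ _)

theorem amp_eq_blockRow_mul {N n K : ℕ} (y : Fin K → Matrix (Fin N) (Fin N) ℂ)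
    (α β : Matrix (Fin N) (Fin N) ℂ) (g : Matrix (Fin N × Fin n) (Fin N × Fin n) ℂ) :
    amp (fun x => ∑ k, y k * x * (y k)ᴴ) ((α ⊗ₖ (1 : Matrix (Fin n) (Fin n) ℂ)) * g *
      (β ⊗ₖ (1 : Matrix (Fin n) (Fin n) ℂ))) =
      (blockRow y α ⊗ₖ (1 : Matrix (Fin n) (Fin n) ℂ)) * replicateBlock (Fin N) (Fin K) (Fin n) g *
        ((blockRow y βᴴ)ᴴ ⊗ₖ (1 : Matrix (Fin n) (Fin n) ℂ)) := by
  ext ⟨i, s⟩ ⟨j, t⟩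
  have hentry : (Matrix.of fun i j => ((α ⊗ₖ (1 : Matrix (Fin n) (Fin n) ℂ)) * g *
      (β ⊗ₖ (1 : Matrix (Fin n) (Fin n) ℂ))) (i, s) (j, t)) =
      α * (Matrix.of fun i j => g (i, s) (j, t)) * β := by
    ext i j
    simp [Matrix.mul_apply, Fintype.sum_prod_type, Matrix.one_apply]
  have hstar : ∀ k, β * (y k)ᴴ = (y k * βᴴ)ᴴ := fun k => by simp
  simp only [amp, Matrix.of_apply, hentry, Matrix.sum_apply]
  have hassoc : ∀ k, y k * (α * (Matrix.of fun i j => g (i, s) (j, t)) * β) * (y k)ᴴ =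
      (y k * α) * (Matrix.of fun i j => g (i, s) (j, t)) * (y k * βᴴ)ᴴ := fun k => by
    rw [← hstar]
    simp only [Matrix.mul_assoc]
  simp only [hassoc]
  generalize hA : (fun k => y k * α) = A
  generalize hB : (fun k => y k * βᴴ) = B
  have hA' : ∀ k, y k * α = A k := fun k => congrFun hA k
  have hB' : ∀ k, y k * βᴴ = B k := fun k => congrFun hB k
  simp [Matrix.mul_apply (M := _ * _), Matrix.mul_apply (M := A _),
    Matrix.mul_apply (M := _ ⊗ₖ _), blockRow, replicateBlock, hA', hB',
    Fintype.sum_prod_type, Matrix.one_apply]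

/-- The key estimate in the proof of Lemma 2.3. -/
theorem amp_pisierNorm_le_of_stinespring {N n : ℕ} (p : ℝ≥0∞) (hp : 1 ≤ p) (hptop : p ≠ ∞)
    (K : ℕ) (y : Fin K → Matrix (Fin N) (Fin N) ℂ)
    (u : Matrix (Fin N) (Fin N) ℂ → Matrix (Fin N) (Fin N) ℂ)
    (hu : ∀ x : Matrix (Fin N) (Fin N) ℂ, u x = ∑ k : Fin K, y k * x * (y k)ᴴ)
    (hb : ∀ x : Matrix (Fin N) (Fin N) ℂ, schattenNorm p (u x) ≤ schattenNorm p x)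
    (hn : 1 ≤ n) (α β : Matrix (Fin N) (Fin N) ℂ)
    (g : Matrix (Fin N × Fin n) (Fin N × Fin n) ℂ) (hg : opNorm g ≤ 1)
    (x : Matrix (Fin N × Fin n) (Fin N × Fin n) ℂ)
    (hx : x = (α ⊗ₖ (1 : Matrix (Fin n) (Fin n) ℂ)) * g * (β ⊗ₖ (1 : Matrix (Fin n) (Fin n) ℂ))) :
    pisierNorm p (amp u x) ≤
      Real.sqrt (schattenNorm p (u (α * αᴴ))) * Real.sqrt (schattenNorm p (u (βᴴ * β))) := by
  obtain rfl : u = fun x => ∑ k, y k * x * (y k)ᴴ := funext hu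
  subst hx
  have hp0 : p ≠ 0 := (zero_lt_one.trans_le hp).ne'
  obtain ⟨a, V, ha, haa, hA, hV⟩ := (blockRow y α).exists_isHermitian_mul_partialIsometry
  obtain ⟨b, W, hb', hbb, hB, hW⟩ := (blockRow y βᴴ).exists_isHermitian_mul_partialIsometry
  rw [blockRow_mul_conjTranspose] at haa hbb
  rw [conjTranspose_conjTranspose] at hbb
  set G := replicateBlock (Fin N) (Fin K) (Fin n) g with hG
  set z := (V ⊗ₖ (1 : Matrix (Fin n) (Fin n) ℂ)) * G * (Wᴴ ⊗ₖ (1 : Matrix (Fin n) (Fin n) ℂ))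
    with hz
  have hfactor : amp (fun x => ∑ k, y k * x * (y k)ᴴ) ((α ⊗ₖ (1 : Matrix (Fin n) (Fin n) ℂ)) * g *
      (β ⊗ₖ (1 : Matrix (Fin n) (Fin n) ℂ))) =
      (a ⊗ₖ (1 : Matrix (Fin n) (Fin n) ℂ)) * z * (b ⊗ₖ (1 : Matrix (Fin n) (Fin n) ℂ)) := by
    have hl := mul_kronecker_mul a V (1 : Matrix (Fin n) (Fin n) ℂ)
      (1 : Matrix (Fin n) (Fin n) ℂ)
    have hr := mul_kronecker_mul Wᴴ b (1 : Matrix (Fin n) (Fin n) ℂ)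
      (1 : Matrix (Fin n) (Fin n) ℂ)
    rw [one_mul] at hl hr
    rw [amp_eq_blockRow_mul, hA, hB, conjTranspose_mul, hb'.eq, hl, hr]
    simp only [hz, Matrix.mul_assoc, hG]
  have hzle : opNorm z ≤ 1 := norm_mul_replicateBlock_mul_le_one hV hW hg
  rw [hfactor]
  refine (pisierNorm_le p a b z).trans ?_
  rw [schattenNorm_two_mul_of_conjTranspose_mul_self hp0 hptop (by rw [ha.eq, haa]),
    schattenNorm_two_mul_of_conjTranspose_mul_self hp0 hptop (by rw [hb'.eq, hbb])]
  refine mul_le_mul_of_nonneg_right ?_ (Real.sqrt_nonneg _)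
  exact mul_le_of_le_one_right (Real.sqrt_nonneg _) hzle
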